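/- Let G be a strongly connected Mauldin–Williams graph in ℝ^d satisfying the OSC, with the sets X_i having pairwise disjoint interiors, let (K_i)_{i∈V} be the associated graph-directed self-similar sets, let K = ⋃_{i∈V} K_i, and let s₀ = s₀(G). Then for every i ∈ V: the Hausdorff dimension of K_i equals s₀, the limit lim_{r↓0} log N_r(K_i)/log(1/r) exists and equals s₀ (and the same holds for K), and 0 < ℋ^{s₀}(K_i) < ∞, where ℋ^{s₀} is the s₀-dimensional Hausdorff measure. -/

import Mathlib

open Set Filter Topology MeasureTheory Metric

noncomputable section

/-- Points of `ℝ^d`. -/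
abbrev Pt (d : ℕ) := EuclideanSpace ℝ (Fin d)

/-- The `r`-covering number of `A ⊆ ℝ^d`: the least number of closed balls of
radius `r` needed to cover `A`. -/
noncomputable def coveringNumber {d : ℕ} (A : Set (Pt d)) (r : ℝ) : ℕ :=
  sInf {k : ℕ | ∃ c : Fin k → Pt d, A ⊆ ⋃ i, Metric.closedBall (c i) r}

/-- A Mauldin–Williams graph in `ℝ^d` over a finite directed multigraph with
vertex type `V` and edge type `E`: each vertex `i` carries a non-empty compact
set `X i` equal to the closure of its interior, and each edge `e` carries a
contractive similarity `S e` of ratio `r e ∈ (0,1)` mapping `X (term e)` into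
`X (init e)`. -/
structure MWGraph (d : ℕ) (V E : Type) [Fintype V] [Fintype E] where
  init : E → V
  term : E → V
  X : V → Set (Pt d)
  S : E → Pt d → Pt d
  r : E → ℝ
  X_nonempty : ∀ i, (X i).Nonempty
  X_compact : ∀ i, IsCompact (X i)
  X_regular : ∀ i, closure (interior (X i)) = X i
  r_pos : ∀ e, 0 < r e
  r_lt_one : ∀ e, r e < 1
  S_maps : ∀ e, Set.MapsTo (S e) (X (term e)) (X (init e))
  S_sim : ∀ e x y, dist (S e x) (S e y) = r e * dist x y

namespace MWGraph

variable {d : ℕ} {V E : Type} [Fintype V] [Fintype E]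

variable (G : MWGraph d V E)

/-- `G.IsPathFrom j γ` holds iff the list of edges `γ` is a directed path
starting at vertex `j`. -/
def IsPathFrom : V → List E → Prop
  | _, [] => True
  | j, e :: es => G.init e = j ∧ IsPathFrom (G.term e) es

/-- Terminal vertex of the path `γ` starting at `j`. -/
def pathTerm : V → List E → V
  | j, [] => j
  | _, e :: es => pathTerm (G.term e) es

/-- `S_γ = S_{e₁} ∘ ⋯ ∘ S_{eₙ}` (with `S_∅ = id`). -/
def pathMap : List E → Pt d → Pt d
  | [] => id
  | e :: es => G.S e ∘ pathMap es

/-- `r_γ = r_{e₁} ⋯ r_{eₙ}` (with `r_∅ = 1`). -/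
def pathRatio (γ : List E) : ℝ := (γ.map G.r).prod

/-- The underlying multigraph is strongly connected: for every ordered pair of
vertices there is a (non-empty) directed path from the first to the second. -/
def StronglyConnected : Prop :=
  ∀ i j : V, ∃ γ : List E, γ ≠ [] ∧ G.IsPathFrom i γ ∧ G.pathTerm i γ = j

/-- `K` is the list of graph-directed self-similar sets of `G`: the unique list
of non-empty compact sets with `K i = ⋃_{e ∈ E_i} S_e (K (term e))`. -/
def IsAttractor (K : V → Set (Pt d)) : Prop :=
  (∀ i, IsCompact (K i)) ∧ (∀ i, (K i).Nonempty) ∧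
    ∀ i, K i = ⋃ e ∈ {e : E | G.init e = i}, G.S e '' K (G.term e)

/-- `C` is an admissible list of condensation sets: compact subsets of the `X i`. -/
def IsCondensation (C : V → Set (Pt d)) : Prop :=
  ∀ i, IsCompact (C i) ∧ C i ⊆ G.X i

/-- `K` is the list of inhomogeneous graph-directed self-similar sets of `(G, C)`:
the unique list of non-empty compact sets with
`K i = ⋃_{e ∈ E_i} S_e (K (term e)) ∪ C i`. -/
def IsInhomAttractor (C : V → Set (Pt d)) (K : V → Set (Pt d)) : Prop :=
  (∀ i, IsCompact (K i)) ∧ (∀ i, (K i).Nonempty) ∧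
    ∀ i, K i = (⋃ e ∈ {e : E | G.init e = i}, G.S e '' K (G.term e)) ∪ C i

/-- `G` satisfies the open set condition with the open sets `U`. -/
def IsOSCWith (U : V → Set (Pt d)) : Prop :=
  (∀ i, (U i).Nonempty) ∧ (∀ i, IsOpen (U i)) ∧ (∀ i, Bornology.IsBounded (U i)) ∧
    (∀ i, U i ⊆ G.X i) ∧
    (∀ i, (⋃ e ∈ {e : E | G.init e = i}, G.S e '' U (G.term e)) ⊆ U i) ∧
    ∀ e e' : E, G.init e = G.init e' → e ≠ e' →
      Disjoint (G.S e '' U (G.term e)) (G.S e' '' U (G.term e'))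

/-- The set `{-log r_γ : γ a directed cycle of G}`. -/
def cycleSet : Set ℝ :=
  {x : ℝ | ∃ (j : V) (γ : List E), γ ≠ [] ∧ G.IsPathFrom j γ ∧ G.pathTerm j γ = j ∧
    x = -Real.log (G.pathRatio γ)}

/-- `G_M`, the smallest closed additive subgroup of `ℝ` containing
`{-log r_γ : γ a directed cycle}`. -/
def GM : Set ℝ := closure ((AddSubgroup.closure (G.cycleSet) : AddSubgroup ℝ) : Set ℝ)

variable [DecidableEq V]

/-- The matrix `A_G^s` with entries `(A_G^s)_{ij} = Σ_{e ∈ E_{ij}} r_e^s`. -/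
def Amatrix (s : ℝ) : Matrix V V ℝ :=
  Matrix.of fun i j => ∑ e : E, if G.init e = i ∧ G.term e = j then G.r e ^ s else 0

end MWGraph

/-- Spectral radius of a real square matrix: the largest modulus of a complex
eigenvalue. -/
noncomputable def matrixSpectralRadius {n : Type} [Fintype n] [DecidableEq n]
    (A : Matrix n n ℝ) : ℝ :=
  sSup {x : ℝ | ∃ μ : ℂ, μ ∈ spectrum ℂ (A.map (fun a : ℝ => (a : ℂ))) ∧ x = ‖μ‖}

/-- `s` is the (unique) exponent `s ≥ 0` with `ρ(A_G^s) = 1`, i.e. `s = s₀(G)`. -/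
def IsS0 {d : ℕ} {V E : Type} [Fintype V] [Fintype E] [DecidableEq V]
    (G : MWGraph d V E) (s : ℝ) : Prop :=
  0 ≤ s ∧ matrixSpectralRadius (G.Amatrix s) = 1

section PerronFrobenius

open Matrix

variable {n : Type} [Fintype n]

lemma mulVec_mono_of_nonneg {A : Matrix n n ℝ} (hA : ∀ i j, 0 ≤ A i j) {x y : n → ℝ}
    (h : x ≤ y) : A *ᵥ x ≤ A *ᵥ y := fun i =>
  Finset.sum_le_sum fun j _ => mul_le_mul_of_nonneg_left (h j) (hA i j)

variable [DecidableEq n]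

lemma matrixSpectralRadius_eq_sSup_image (A : Matrix n n ℝ) :
    matrixSpectralRadius A = sSup (norm '' spectrum ℂ (A.map (fun a : ℝ => (a : ℂ)))) := by
  rw [matrixSpectralRadius]
  congr 1
  ext x
  simp [Set.mem_image, eq_comm]

lemma nonempty_of_matrixSpectralRadius_eq_one {A : Matrix n n ℝ}
    (hρ : matrixSpectralRadius A = 1) : Nonempty n := by
  by_contra hempty
  rw [not_nonempty_iff] at hempty
  simp [matrixSpectralRadius, spectrum.of_subsingleton] at hρ

lemma spectrum_norm_le_matrixSpectralRadius (A : Matrix n n ℝ) {μ : ℂ}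
    (hμ : μ ∈ spectrum ℂ (A.map (fun a : ℝ => (a : ℂ)))) : ‖μ‖ ≤ matrixSpectralRadius A := by
  rw [matrixSpectralRadius_eq_sSup_image]
  refine le_csSup ?_ (Set.mem_image_of_mem _ hμ)
  exact ((Matrix.finite_spectrum _).image _).bddAbove

lemma exists_norm_eq_matrixSpectralRadius [Nonempty n] (A : Matrix n n ℝ) :
    ∃ μ ∈ spectrum ℂ (A.map (fun a : ℝ => (a : ℂ))), ‖μ‖ = matrixSpectralRadius A := by
  have hne := spectrum.nonempty_of_isAlgClosed_of_finiteDimensional ℂ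
    (A.map (fun a : ℝ => (a : ℂ)))
  have hfin : (spectrum ℂ (A.map (fun a : ℝ => (a : ℂ)))).Finite := Matrix.finite_spectrum _
  have := (hne.image norm).csSup_mem (hfin.image norm)
  rwa [← matrixSpectralRadius_eq_sSup_image] at this

attribute [local instance] Matrix.linftyOpNormedRing Matrix.linftyOpNormedAlgebra

lemma eventually_norm_map_pow_le (A : Matrix n n ℝ) {q : ℝ} (hq : matrixSpectralRadius A < q)
    (hq0 : 0 < q) :
    ∀ᶠ k : ℕ in atTop, ‖(A.map (fun a : ℝ => (a : ℂ))) ^ k‖ ≤ q ^ k := by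
  set M := A.map (fun a : ℝ => (a : ℂ)) with hM
  have hρ : spectralRadius ℂ M < ENNReal.ofReal q := by
    refine lt_of_le_of_lt (b := ENNReal.ofReal (matrixSpectralRadius A)) ?_ ?_
    · refine iSup₂_le fun μ hμ => ?_
      change ‖μ‖ₑ ≤ _
      rw [← ofReal_norm μ]
      exact ENNReal.ofReal_le_ofReal (spectrum_norm_le_matrixSpectralRadius A hμ)
    · exact (ENNReal.ofReal_lt_ofReal_iff hq0).2 hq
  have hlim := spectrum.pow_norm_pow_one_div_tendsto_nhds_spectralRadius M
  filter_upwards [hlim.eventually_lt_const hρ, eventually_gt_atTop 0] with k hk hk0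
  have h1 := (ENNReal.ofReal_lt_ofReal_iff hq0).1 hk
  have h2 := Real.rpow_le_rpow (by positivity) h1.le (z := (k : ℝ)) (by positivity)
  rw [← Real.rpow_mul (norm_nonneg _), one_div, inv_mul_cancel₀ (by positivity), Real.rpow_one,
    Real.rpow_natCast] at h2
  exact h2

/-- A positive vector cannot be expanded by a nonnegative matrix by more than its spectral
radius. -/
lemma le_matrixSpectralRadius_of_smul_le_mulVec [Nonempty n] {A : Matrix n n ℝ}
    (hA : ∀ i j, 0 ≤ A i j) {z : n → ℝ} (hz : ∀ i, 0 < z i) {c : ℝ} (hc : 0 < c)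
    (h : c • z ≤ A *ᵥ z) : c ≤ matrixSpectralRadius A := by
  by_contra! hlt
  obtain ⟨q, hq, hqc⟩ := exists_between (max_lt hlt hc)
  obtain ⟨hq1, hq0⟩ := max_lt_iff.1 hq
  have hpow : ∀ k : ℕ, c ^ k • z ≤ (A ^ k) *ᵥ z := by
    intro k
    induction k with
    | zero => simp
    | succ k ih =>
      calc c ^ (k + 1) • z = c ^ k • (c • z) := by rw [smul_smul, pow_succ]
        _ ≤ c ^ k • (A *ᵥ z) := smul_le_smul_of_nonneg_left h (by positivity)
        _ = A *ᵥ (c ^ k • z) := (Matrix.mulVec_smul _ _ _).symm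
        _ ≤ A *ᵥ ((A ^ k) *ᵥ z) := mulVec_mono_of_nonneg hA ih
        _ = (A ^ (k + 1)) *ᵥ z := by rw [Matrix.mulVec_mulVec, pow_succ']
  set M := A.map (fun a : ℝ => (a : ℂ)) with hM
  have hMpow : ∀ k : ℕ, M ^ k = (A ^ k).map (fun a : ℝ => (a : ℂ)) := fun k =>
    (map_pow (Complex.ofRealHom.mapMatrix) A k).symm
  let zc : n → ℂ := fun i => (z i : ℂ)
  obtain ⟨i⟩ := ‹Nonempty n›
  have hbd : ∀ k : ℕ, c ^ k * z i ≤ ‖M ^ k‖ * ‖zc‖ := by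
    intro k
    have h1 : ‖((M ^ k) *ᵥ zc) i‖ ≤ ‖M ^ k‖ * ‖zc‖ :=
      (norm_le_pi_norm _ i).trans (Matrix.linfty_opNorm_mulVec _ _)
    have h2 : ((M ^ k) *ᵥ zc) i = (((A ^ k) *ᵥ z) i : ℝ) := by
      rw [hMpow]
      simp [Matrix.mulVec, dotProduct, zc]
    rw [h2, Complex.norm_real] at h1
    exact ((hpow k i).trans (le_abs_self _)).trans h1
  have hgrow := tendsto_pow_atTop_atTop_of_one_lt ((one_lt_div hq0).2 hqc)
  obtain ⟨k, hk1, hk2⟩ := ((eventually_norm_map_pow_le A hq1 hq0).and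
    (hgrow.eventually_gt_atTop (‖zc‖ / z i))).exists
  have h3 : c ^ k * z i ≤ q ^ k * ‖zc‖ :=
    (hbd k).trans (mul_le_mul_of_nonneg_right hk1 (norm_nonneg _))
  rw [div_pow, div_lt_div_iff₀ (hz i) (by positivity)] at hk2
  linarith [mul_comm ‖zc‖ (q ^ k)]

/-- Perron–Frobenius: an irreducible nonnegative matrix of spectral radius one fixes a positive
vector. -/
theorem exists_pos_mulVec_eq_self {A : Matrix n n ℝ} (hA : ∀ i j, 0 ≤ A i j)
    (hirr : ∀ i j, ∃ k : ℕ, 0 < (A ^ k) i j) (hρ : matrixSpectralRadius A = 1) :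
    ∃ v : n → ℝ, (∀ i, 0 < v i) ∧ A *ᵥ v = v := by
  have hne : Nonempty n := nonempty_of_matrixSpectralRadius_eq_one hρ
  obtain ⟨μ, hμ, hμ1⟩ := exists_norm_eq_matrixSpectralRadius A
  rw [hρ] at hμ1
  obtain ⟨u, hu0, hu⟩ : ∃ u : n → ℂ, u ≠ 0 ∧ (A.map (fun a : ℝ => (a : ℂ))) *ᵥ u = μ • u := by
    rw [← Matrix.spectrum_toLin', ← Module.End.hasEigenvalue_iff_mem_spectrum] at hμ
    obtain ⟨u, hu⟩ := hμ.exists_hasEigenvector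
    exact ⟨u, hu.2, by simpa using hu.apply_eq_smul⟩
  let w : n → ℝ := fun i => ‖u i‖
  have hw0 : ∀ i, 0 ≤ w i := fun i => norm_nonneg _
  have hwA : w ≤ A *ᵥ w := by
    intro i
    have h1 : ‖((A.map (fun a : ℝ => (a : ℂ))) *ᵥ u) i‖ = w i := by
      rw [hu]
      simp [hμ1, w]
    rw [← h1]
    refine (norm_sum_le _ _).trans (Finset.sum_le_sum fun j _ => ?_)
    simp [w, abs_of_nonneg (hA i j)]
  choose k hk using hirr
  let B : Matrix n n ℝ := ∑ p : n × n, A ^ k p.1 p.2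
  have hpow : ∀ m i j, 0 ≤ (A ^ m) i j := by
    intro m
    induction m with
    | zero =>
      intro i j
      rw [pow_zero, Matrix.one_apply]
      split_ifs <;> norm_num
    | succ m ih =>
      intro i j
      rw [pow_succ, Matrix.mul_apply]
      exact Finset.sum_nonneg fun l _ => mul_nonneg (ih i l) (hA l j)
  have hB : ∀ i j, 0 < B i j := by
    intro i j
    simp only [B, Matrix.sum_apply]
    exact Finset.sum_pos' (fun p _ => hpow _ i j) ⟨(i, j), Finset.mem_univ _, hk i j⟩
  have hBpos : ∀ x : n → ℝ, 0 ≤ x → x ≠ 0 → ∀ i, 0 < (B *ᵥ x) i := by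
    intro x hx hx0 i
    obtain ⟨j, hj⟩ := Function.ne_iff.1 hx0
    exact Finset.sum_pos' (fun l _ => mul_nonneg (hB i l).le (hx l))
      ⟨j, Finset.mem_univ _, mul_pos (hB i j) (lt_of_le_of_ne (hx j) (Ne.symm hj))⟩
  have hcomm : A * B = B * A := by
    simp only [B, Finset.mul_sum, Finset.sum_mul]
    exact Finset.sum_congr rfl fun p _ => ((Commute.refl A).pow_right _).eq
  have hwne : w ≠ 0 := by
    obtain ⟨j, hj⟩ := Function.ne_iff.1 hu0
    exact Function.ne_iff.2 ⟨j, by simpa [w] using hj⟩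
  have hz := hBpos w hw0 hwne
  have hfix : A *ᵥ w = w := by
    by_contra hne'
    have hgap := hBpos (A *ᵥ w - w) (sub_nonneg.2 hwA) (sub_ne_zero.2 hne')
    have hgap' : ∀ i, (B *ᵥ w) i < (A *ᵥ (B *ᵥ w)) i := by
      intro i
      have := hgap i
      rw [Matrix.mulVec_sub, Matrix.mulVec_mulVec, ← hcomm, ← Matrix.mulVec_mulVec] at this
      simpa using this
    obtain ⟨i₀, hi₀⟩ := Finite.exists_min fun i => (A *ᵥ (B *ᵥ w)) i / (B *ᵥ w) i
    have h1 := (one_lt_div (hz i₀)).2 (hgap' i₀)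
    have h2 := le_matrixSpectralRadius_of_smul_le_mulVec hA hz (zero_lt_one.trans h1)
      (fun i => (le_div_iff₀ (hz i)).1 (hi₀ i))
    linarith
  refine ⟨B *ᵥ w, hz, ?_⟩
  rw [Matrix.mulVec_mulVec, hcomm, ← Matrix.mulVec_mulVec, hfix]

end PerronFrobenius

section Auxiliary

/-- A counting function comparable to `r ^ (-s)` has logarithmic growth rate `s`. -/
lemma tendsto_log_div_log_of_rpow_bounds {N : ℝ → ℕ} {s c C R : ℝ} (hc : 0 < c) (hR : 0 < R)
    (hlow : ∀ r, 0 < r → r ≤ R → c * r ^ (-s) ≤ N r)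
    (hup : ∀ r, 0 < r → r ≤ R → (N r : ℝ) ≤ C * r ^ (-s)) :
    Tendsto (fun r : ℝ => Real.log (N r : ℝ) / Real.log (1 / r)) (𝓝[>] (0 : ℝ)) (𝓝 s) := by
  have hC : 0 < C := by
    have h1 := (hlow R hR le_rfl).trans (hup R hR le_rfl)
    exact hc.trans_le (le_of_mul_le_mul_right h1 (Real.rpow_pos_of_pos hR _))
  have hL : Tendsto (fun r : ℝ => Real.log (1 / r)) (𝓝[>] (0 : ℝ)) atTop := by
    simp only [one_div]
    exact Real.tendsto_log_atTop.comp tendsto_inv_nhdsGT_zero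
  have hlim : ∀ a : ℝ, Tendsto (fun r : ℝ => Real.log a / Real.log (1 / r) + s)
      (𝓝[>] (0 : ℝ)) (𝓝 s) := fun a => by
    simpa using (hL.const_div_atTop (Real.log a)).add_const s
  have hlog : ∀ a r : ℝ, 0 < a → 0 < r →
      Real.log (a * r ^ (-s)) = Real.log a + s * Real.log (1 / r) := by
    intro a r ha hr
    rw [Real.log_mul ha.ne' (Real.rpow_pos_of_pos hr _).ne', Real.log_rpow hr, one_div,
      Real.log_inv]
    ring
  have hev : ∀ᶠ r : ℝ in 𝓝[>] (0 : ℝ), 0 < r ∧ r ≤ R ∧ 0 < Real.log (1 / r) := by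
    filter_upwards [self_mem_nhdsWithin, Ioc_mem_nhdsGT hR, hL.eventually_gt_atTop 0]
      with r h1 h2 h3 using ⟨h1, h2.2, h3⟩
  refine tendsto_of_tendsto_of_tendsto_of_le_of_le' (hlim c) (hlim C) ?_ ?_
  · filter_upwards [hev] with r ⟨hr, hrR, hLr⟩
    rw [le_div_iff₀ hLr, add_mul, div_mul_cancel₀ _ hLr.ne', ← hlog c r hc hr]
    exact Real.log_le_log (mul_pos hc (Real.rpow_pos_of_pos hr _)) (hlow r hr hrR)
  · filter_upwards [hev] with r ⟨hr, hrR, hLr⟩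
    rw [div_le_iff₀ hLr, add_mul, div_mul_cancel₀ _ hLr.ne', ← hlog C r hC hr]
    exact Real.log_le_log ((mul_pos hc (Real.rpow_pos_of_pos hr _)).trans_le (hlow r hr hrR))
      (hup r hr hrR)

variable {d : ℕ}

lemma exists_fin_cover_of_finset_cover {A : Set (Pt d)} {r : ℝ} {t : Finset (Pt d)}
    (h : A ⊆ ⋃ c ∈ t, closedBall c r) :
    ∃ c : Fin t.card → Pt d, A ⊆ ⋃ k, closedBall (c k) r := by
  refine ⟨fun k => (t.equivFin.symm k : Pt d), h.trans (iUnion₂_subset fun c hc => ?_)⟩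
  refine subset_iUnion_of_subset (t.equivFin ⟨c, hc⟩) ?_
  simp

lemma coveringNumber_le_card {A : Set (Pt d)} {r : ℝ} {t : Finset (Pt d)}
    (h : A ⊆ ⋃ c ∈ t, closedBall c r) : coveringNumber A r ≤ t.card :=
  Nat.sInf_le (exists_fin_cover_of_finset_cover h)

lemma exists_cover_coveringNumber {A : Set (Pt d)} {r : ℝ} {t : Finset (Pt d)}
    (h : A ⊆ ⋃ c ∈ t, closedBall c r) :
    ∃ c : Fin (coveringNumber A r) → Pt d, A ⊆ ⋃ k, closedBall (c k) r :=
  Nat.sInf_mem (s := {k : ℕ | ∃ c : Fin k → Pt d, A ⊆ ⋃ i, closedBall (c i) r})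
    ⟨t.card, exists_fin_cover_of_finset_cover h⟩

/-- Covers by at most `C * r ^ (-s)` balls of small radius `r` bound the `s`-dimensional
Hausdorff measure. -/
lemma hausdorffMeasure_lt_top_of_cover {A : Set (Pt d)} {s C R : ℝ} (hs : 0 ≤ s) (hR : 0 < R)
    (h : ∀ r, 0 < r → r ≤ R → ∃ t : Finset (Pt d), A ⊆ ⋃ c ∈ t, closedBall c r ∧
      (t.card : ℝ) ≤ C * r ^ (-s)) : μH[s] A < ⊤ := by
  have hrad : ∀ n : ℕ, 0 < R / (n + 1) ∧ R / (n + 1) ≤ R := fun n =>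
    ⟨by positivity, div_le_self hR.le (by linarith [n.cast_nonneg (α := ℝ)])⟩
  choose t hcov hcard using fun n : ℕ => h (R / (n + 1)) (hrad n).1 (hrad n).2
  have hdiam : ∀ (n : ℕ) (c : Pt d),
      ediam (closedBall c (R / (n + 1))) ≤ ENNReal.ofReal (2 * (R / (n + 1))) := by
    intro n c
    refine ediam_le fun x hx y hy => ?_
    rw [edist_dist]
    refine ENNReal.ofReal_le_ofReal ?_
    have := dist_triangle_right x y c
    rw [mem_closedBall] at hx hy
    linarith
  have hlim : Tendsto (fun n : ℕ => ENNReal.ofReal (2 * (R / (n + 1)))) atTop (𝓝 0) := by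
    rw [← ENNReal.ofReal_zero]
    refine ENNReal.tendsto_ofReal ?_
    have h1 := (tendsto_one_div_add_atTop_nhds_zero_nat (𝕜 := ℝ)).const_mul (2 * R)
    rw [mul_zero] at h1
    refine h1.congr fun n => ?_
    ring
  have hle := Measure.hausdorffMeasure_le_liminf_sum (ι := fun n : ℕ => (t n : Set (Pt d)))
    s A (l := atTop)
    (fun n : ℕ => ENNReal.ofReal (2 * (R / (n + 1)))) hlim
    (fun n c => closedBall (c : Pt d) (R / (n + 1)))
    (Eventually.of_forall fun n c => hdiam n c)
    (Eventually.of_forall fun n => by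
      refine (hcov n).trans (iUnion₂_subset fun c hc => ?_)
      exact subset_iUnion_of_subset ⟨c, hc⟩ subset_rfl)
  refine (hle.trans (liminf_le_of_le (a := ENNReal.ofReal (C * 2 ^ s)) (by isBoundedDefault)
    fun b hb => ?_)).trans_lt ENNReal.ofReal_lt_top
  obtain ⟨n, hn⟩ := hb.exists
  refine hn.trans ?_
  have hterm : ∀ c : (t n : Set (Pt d)), ediam (closedBall (c : Pt d) (R / (n + 1))) ^ s ≤
      ENNReal.ofReal ((2 * (R / (n + 1))) ^ s) := by
    intro c
    rw [← ENNReal.ofReal_rpow_of_nonneg (by have := (hrad n).1; positivity) hs]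
    exact ENNReal.rpow_le_rpow (hdiam n c) hs
  refine (Finset.sum_le_sum fun c _ => hterm c).trans ?_
  rw [Finset.sum_const, nsmul_eq_mul, ← ENNReal.ofReal_natCast, ← ENNReal.ofReal_mul (by positivity)]
  refine ENNReal.ofReal_le_ofReal ?_
  have hpos := (hrad n).1
  have hcard' : (Finset.univ : Finset (t n : Set (Pt d))).card = (t n).card := by
    simp
  rw [hcard', Real.mul_rpow (by norm_num) hpos.le]
  calc ((t n).card : ℝ) * (2 ^ s * (R / (n + 1)) ^ s)
      ≤ (C * (R / (n + 1)) ^ (-s)) * (2 ^ s * (R / (n + 1)) ^ s) := by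
        gcongr
        exact hcard n
    _ = C * 2 ^ s * ((R / (n + 1)) ^ (-s) * (R / (n + 1)) ^ s) := by ring
    _ = C * 2 ^ s := by rw [← Real.rpow_add hpos]; simp

/-- If finite covers of a compact set by sets of small diameter have `s`-dimensional sums bounded
below, then its `s`-dimensional Hausdorff measure is positive. -/
lemma hausdorffMeasure_pos_of_finite_cover {A : Set (Pt d)} (hA : IsCompact A) {s c R : ℝ}
    (hs : 0 ≤ s) (hc : 0 < c) (hR : 0 < R)
    (h : ∀ (F : Finset ℕ) (W : ℕ → Set (Pt d)) (δ : ℕ → ℝ),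
      (∀ k ∈ F, 0 < δ k ∧ δ k ≤ R ∧ ∀ x ∈ W k, ∀ y ∈ W k, dist x y ≤ δ k) →
      A ⊆ ⋃ k ∈ F, W k → c ≤ ∑ k ∈ F, δ k ^ s) : 0 < μH[s] A := by
  refine (ENNReal.ofReal_pos.2 (half_pos hc)).trans_le ?_
  rw [Measure.hausdorffMeasure_apply]
  refine le_iSup₂_of_le (ENNReal.ofReal (R / 2)) (ENNReal.ofReal_pos.2 (half_pos hR)) ?_
  refine le_iInf fun t => le_iInf fun hcov => le_iInf fun hdiam => ?_
  have hfin : ∀ n, ediam (t n) ≠ ⊤ := fun n => ne_top_of_le_ne_top ENNReal.ofReal_ne_top (hdiam n)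
  have hdiamR : ∀ n, diam (t n) ≤ R / 2 := fun n =>
    ENNReal.toReal_le_of_le_ofReal (by positivity) (hdiam n)
  have hε : ∀ n : ℕ, ∃ ε : ℝ, 0 < ε ∧ ε ≤ R / 2 ∧
      (diam (t n) + ε) ^ s ≤ diam (t n) ^ s + c / 4 * (1 / 2) ^ n := by
    intro n
    have hcont : Tendsto (fun ε : ℝ => (diam (t n) + ε) ^ s) (𝓝[>] 0) (𝓝 (diam (t n) ^ s)) := by
      have h1 : Continuous fun ε : ℝ => (diam (t n) + ε) ^ s :=
        (Real.continuous_rpow_const hs).comp (continuous_const.add continuous_id)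
      simpa using (h1.tendsto 0).mono_left nhdsWithin_le_nhds
    have hlt : diam (t n) ^ s < diam (t n) ^ s + c / 4 * (1 / 2) ^ n := by
      linarith [show 0 < c / 4 * (1 / 2) ^ n by positivity]
    obtain ⟨ε, h1, h2⟩ :=
      ((hcont.eventually_lt_const hlt).and (Ioc_mem_nhdsGT (half_pos hR))).exists
    exact ⟨ε, h2.1, h2.2, h1.le⟩
  choose ε hε0 hεR hεs using hε
  obtain ⟨F, hF⟩ := hA.elim_finite_subcover (fun n => thickening (ε n / 2) (t n))
    (fun n => isOpen_thickening)
    (hcov.trans (iUnion_mono fun n => self_subset_thickening (half_pos (hε0 n)) _))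
  classical
  have hbound := h (F.filter fun n => (t n).Nonempty) (fun n => thickening (ε n / 2) (t n))
    (fun n => diam (t n) + ε n)
    (fun n _ => ⟨by linarith [diam_nonneg (s := t n), hε0 n], by linarith [hdiamR n, hεR n],
      fun x hx y hy => by
        obtain ⟨x', hx', hxx⟩ := mem_thickening_iff.1 hx
        obtain ⟨y', hy', hyy⟩ := mem_thickening_iff.1 hy
        have h1 := dist_le_diam_of_mem (isBounded_iff_ediam_ne_top.2 (hfin n)) hx' hy'
        have h2 := dist_triangle4_right x y x' y'
        linarith⟩)
    (hF.trans (iUnion₂_subset fun n hn x hx => by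
      obtain ⟨x', hx', -⟩ := mem_thickening_iff.1 hx
      exact mem_iUnion₂.2 ⟨n, Finset.mem_filter.2 ⟨hn, x', hx'⟩, hx⟩))
  set F' := F.filter fun n => (t n).Nonempty with hF'
  have hgeom : ∑ n ∈ F', c / 4 * (1 / 2 : ℝ) ^ n ≤ c / 2 := by
    rw [← Finset.mul_sum]
    have := summable_geometric_two.sum_le_tsum F' fun n _ => by positivity
    rw [tsum_geometric_two] at this
    nlinarith
  have hreal : c / 2 ≤ ∑ n ∈ F', diam (t n) ^ s := by
    have := hbound.trans (Finset.sum_le_sum fun n _ => hεs n)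
    rw [Finset.sum_add_distrib] at this
    linarith
  calc ENNReal.ofReal (c / 2) ≤ ENNReal.ofReal (∑ n ∈ F', diam (t n) ^ s) :=
        ENNReal.ofReal_le_ofReal hreal
    _ = ∑ n ∈ F', ENNReal.ofReal (diam (t n) ^ s) :=
        ENNReal.ofReal_sum_of_nonneg fun n _ => Real.rpow_nonneg diam_nonneg _
    _ ≤ ∑ n ∈ F', ⨆ _ : (t n).Nonempty, ediam (t n) ^ s := by
        refine Finset.sum_le_sum fun n hn => ?_
        refine le_iSup_of_le (Finset.mem_filter.1 hn).2 ?_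
        rw [← ENNReal.ofReal_rpow_of_nonneg diam_nonneg hs, diam, ENNReal.ofReal_toReal (hfin n)]
    _ ≤ ∑' n, ⨆ _ : (t n).Nonempty, ediam (t n) ^ s := ENNReal.sum_le_tsum _

end Auxiliary

namespace MWGraph

variable {d : ℕ} {V E : Type} [Fintype V] [Fintype E] (G : MWGraph d V E)

lemma exists_ratio_bounds :
    ∃ a b : ℝ, 0 < a ∧ a ≤ 1 ∧ 0 < b ∧ b < 1 ∧ ∀ e, a ≤ G.r e ∧ G.r e ≤ b := by
  rcases isEmpty_or_nonempty E with hE | hE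
  · exact ⟨1, 1 / 2, one_pos, le_rfl, by norm_num, by norm_num, fun e => (hE.false e).elim⟩
  · obtain ⟨e₀, he₀⟩ := Finite.exists_min G.r
    obtain ⟨e₁, he₁⟩ := Finite.exists_max G.r
    exact ⟨G.r e₀, G.r e₁, G.r_pos _, (G.r_lt_one _).le, G.r_pos _, G.r_lt_one _,
      fun e => ⟨he₀ e, he₁ e⟩⟩

lemma antilipschitz_S (e : E) : AntilipschitzWith (Real.toNNReal (G.r e)⁻¹) (G.S e) := by
  refine AntilipschitzWith.of_le_mul_dist fun x y => ?_
  rw [G.S_sim, Real.coe_toNNReal _ (inv_nonneg.2 (G.r_pos e).le),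
    inv_mul_cancel_left₀ (G.r_pos e).ne']

lemma measurableEmbedding_S (e : E) : MeasurableEmbedding (G.S e) := by
  have hu : UniformContinuous (G.S e) :=
    (LipschitzWith.of_dist_le_mul (K := Real.toNNReal (G.r e)) fun x y => by
      rw [G.S_sim, Real.coe_toNNReal _ (G.r_pos e).le]).uniformContinuous
  exact ((G.antilipschitz_S e).isClosedEmbedding hu).measurableEmbedding

lemma rpow_mul_hausdorffMeasure_le (e : E) (A : Set (Pt d)) :
    ENNReal.ofReal (G.r e ^ d) * μH[(d : ℝ)] A ≤ μH[(d : ℝ)] (G.S e '' A) := by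
  have h := (G.antilipschitz_S e).le_hausdorffMeasure_image (d := (d : ℝ)) d.cast_nonneg A
  have hr := G.r_pos e
  calc ENNReal.ofReal (G.r e ^ d) * μH[(d : ℝ)] A
      ≤ ENNReal.ofReal (G.r e ^ d) *
        ((Real.toNNReal (G.r e)⁻¹ : ENNReal) ^ (d : ℝ) * μH[(d : ℝ)] (G.S e '' A)) := by gcongr
    _ = (ENNReal.ofReal (G.r e ^ d) * ENNReal.ofReal ((G.r e)⁻¹ ^ d)) *
        μH[(d : ℝ)] (G.S e '' A) := by
        rw [ENNReal.rpow_natCast, ENNReal.ofReal_pow (inv_nonneg.2 hr.le), mul_assoc]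
        rfl
    _ = μH[(d : ℝ)] (G.S e '' A) := by
        rw [← ENNReal.ofReal_mul (by positivity), ← mul_pow, mul_inv_cancel₀ hr.ne', one_pow,
          ENNReal.ofReal_one, one_mul]

variable {G} in
lemma IsAttractor.mapsTo {K : V → Set (Pt d)} (hK : G.IsAttractor K) (e : E) :
    MapsTo (G.S e) (K (G.term e)) (K (G.init e)) := by
  intro x hx
  rw [hK.2.2 (G.init e)]
  exact mem_iUnion₂.2 ⟨e, rfl, mem_image_of_mem _ hx⟩

variable [DecidableEq V]

lemma Amatrix_nonneg (s : ℝ) (i j : V) : 0 ≤ G.Amatrix s i j := by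
  refine Finset.sum_nonneg fun e _ => ?_
  split_ifs
  · exact Real.rpow_nonneg (G.r_pos e).le _
  · exact le_rfl

lemma Amatrix_pos (s : ℝ) (e : E) : 0 < G.Amatrix s (G.init e) (G.term e) := by
  refine Finset.sum_pos' (fun e' _ => ?_) ⟨e, Finset.mem_univ _, ?_⟩
  · split_ifs
    · exact Real.rpow_nonneg (G.r_pos e').le _
    · exact le_rfl
  · simpa using Real.rpow_pos_of_pos (G.r_pos e) s

lemma Amatrix_pow_nonneg (s : ℝ) (k : ℕ) (i j : V) : 0 ≤ (G.Amatrix s ^ k) i j := by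
  induction k generalizing i j with
  | zero =>
    rw [pow_zero, Matrix.one_apply]
    split_ifs <;> norm_num
  | succ k ih =>
    rw [pow_succ, Matrix.mul_apply]
    exact Finset.sum_nonneg fun l _ => mul_nonneg (ih i l) (G.Amatrix_nonneg s l j)

lemma Amatrix_pow_length_pos (s : ℝ) (γ : List E) (i : V) (hγ : G.IsPathFrom i γ) :
    0 < (G.Amatrix s ^ γ.length) i (G.pathTerm i γ) := by
  induction γ generalizing i with
  | nil => simp [pathTerm]
  | cons e es ih =>
    obtain ⟨rfl, hes⟩ := hγ
    rw [List.length_cons, pow_succ', Matrix.mul_apply]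
    exact Finset.sum_pos' (fun l _ => mul_nonneg (G.Amatrix_nonneg s _ l)
        (G.Amatrix_pow_nonneg s _ _ _))
      ⟨G.term e, Finset.mem_univ _, mul_pos (G.Amatrix_pos s e) (ih _ hes)⟩

lemma Amatrix_mulVec_apply (s : ℝ) (v : V → ℝ) (i : V) :
    (G.Amatrix s).mulVec v i = ∑ e with G.init e = i, G.r e ^ s * v (G.term e) := by
  simp only [Matrix.mulVec, dotProduct, Amatrix, Matrix.of_apply, Finset.sum_mul]
  rw [Finset.sum_comm, Finset.sum_filter]
  refine Finset.sum_congr rfl fun e _ => ?_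
  by_cases h : G.init e = i <;> simp [h]

/-- Strongly connected graphs carry a positive harmonic weight at the critical exponent. -/
lemma exists_pos_weight (hSC : G.StronglyConnected) {s : ℝ}
    (hs : matrixSpectralRadius (G.Amatrix s) = 1) :
    ∃ v : V → ℝ, (∀ i, 0 < v i) ∧
      ∀ i, ∑ e with G.init e = i, G.r e ^ s * v (G.term e) = v i := by
  obtain ⟨v, hv, hAv⟩ := exists_pos_mulVec_eq_self (G.Amatrix_nonneg s) (fun i j => by
    obtain ⟨γ, -, hγ, rfl⟩ := hSC i j
    exact ⟨_, G.Amatrix_pow_length_pos s γ i hγ⟩) hs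
  exact ⟨v, hv, fun i => by rw [← G.Amatrix_mulVec_apply, hAv]⟩

section Weighted

variable {G} {K U : V → Set (Pt d)} {v : V → ℝ} {s : ℝ}

/-- The sets of the attractor are covered by at most a multiple of `r ^ (-s)` balls of radius
`r`. -/
lemma IsAttractor.exists_cover_card_le (hK : G.IsAttractor K) (hv : ∀ i, 0 < v i)
    (hfix : ∀ i, ∑ e with G.init e = i, G.r e ^ s * v (G.term e) = v i) (hs : 0 ≤ s) :
    ∃ C R : ℝ, 0 < R ∧ ∀ i r, 0 < r → r ≤ R →
      ∃ t : Finset (Pt d), K i ⊆ ⋃ c ∈ t, closedBall c r ∧ (t.card : ℝ) ≤ C * r ^ (-s) := by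
  classical
  obtain ⟨a, b, ha, ha1, hb, hb1, hab⟩ := G.exists_ratio_bounds
  obtain ⟨D₀, hD₀⟩ := (Metric.isBounded_iff).1
    ((Bornology.isBounded_iUnion (s := K)).2 fun i => (hK.1 i).isBounded)
  set D : ℝ := max D₀ 1 with hDdef
  have hD : 0 < D := lt_max_of_lt_right one_pos
  have hDK : ∀ i, ∀ x ∈ K i, ∀ y ∈ K i, dist x y ≤ D := fun i x hx y hy =>
    (hD₀ (mem_iUnion.2 ⟨i, hx⟩) (mem_iUnion.2 ⟨i, hy⟩)).trans (le_max_left _ _)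
  set M : ℝ := ∑ i, (v i)⁻¹ with hM
  set C : ℝ := M * (D / a) ^ s with hC
  have hM0 : 0 ≤ M := Finset.sum_nonneg fun i _ => (inv_pos.2 (hv i)).le
  have hMv : ∀ i, 1 ≤ M * v i := by
    intro i
    rw [← div_le_iff₀ (hv i), one_div]
    exact Finset.single_le_sum (f := fun i => (v i)⁻¹) (fun j _ => (inv_pos.2 (hv j)).le)
      (Finset.mem_univ i)
  have hC0 : 0 ≤ C := by positivity
  have hbase : ∀ i r, D ≤ r → r ≤ D / a → ∃ t : Finset (Pt d),
      K i ⊆ ⋃ c ∈ t, closedBall c r ∧ (t.card : ℝ) ≤ C * r ^ (-s) * v i := by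
    intro i r hDr hra
    obtain ⟨x, hx⟩ := hK.2.1 i
    have hr : 0 < r := hD.trans_le hDr
    refine ⟨{x}, fun y hy => ?_, ?_⟩
    · simpa using (hDK i y hy x hx).trans hDr
    · have h1 : 1 ≤ (D / a) ^ s * r ^ (-s) := by
        rw [Real.rpow_neg hr.le, ← div_eq_mul_inv, one_le_div (Real.rpow_pos_of_pos hr s)]
        exact Real.rpow_le_rpow hr.le hra hs
      calc ((({x} : Finset (Pt d)).card : ℕ) : ℝ) = 1 := by simp
        _ ≤ (M * v i) * ((D / a) ^ s * r ^ (-s)) := one_le_mul_of_one_le_of_one_le (hMv i) h1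
        _ = C * r ^ (-s) * v i := by rw [hC]; ring
  have hmain : ∀ n : ℕ, ∀ i r, D * b ^ n ≤ r → r ≤ D / a → ∃ t : Finset (Pt d),
      K i ⊆ ⋃ c ∈ t, closedBall c r ∧ (t.card : ℝ) ≤ C * r ^ (-s) * v i := by
    intro n
    induction n with
    | zero =>
      intro i r h1 h2
      exact hbase i r (by simpa using h1) h2
    | succ n ih =>
      intro i r h1 h2
      rcases le_or_gt D r with hDr | hDr
      · exact hbase i r hDr h2
      have hr : 0 < r := lt_of_lt_of_le (by positivity) h1
      have hstep : ∀ e, ∃ t : Finset (Pt d), K (G.term e) ⊆ ⋃ c ∈ t, closedBall c (r / G.r e) ∧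
          (t.card : ℝ) ≤ C * (r / G.r e) ^ (-s) * v (G.term e) := by
        intro e
        have hre := G.r_pos e
        refine ih (G.term e) (r / G.r e) ?_ ?_
        · rw [le_div_iff₀ hre]
          refine le_trans ?_ h1
          rw [pow_succ, ← mul_assoc]
          exact mul_le_mul_of_nonneg_left (hab e).2 (by positivity)
        · exact div_le_div₀ hD.le hDr.le ha (hab e).1
      choose t htcov htcard using hstep
      refine ⟨(Finset.univ.filter fun e => G.init e = i).biUnion fun e => (t e).image (G.S e),
        ?_, ?_⟩
      · intro y hy
        rw [hK.2.2 i] at hy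
        obtain ⟨e, he, x, hx, rfl⟩ := mem_iUnion₂.1 hy
        obtain ⟨c, hc, hxc⟩ := mem_iUnion₂.1 (htcov e hx)
        refine mem_iUnion₂.2 ⟨G.S e c, ?_, ?_⟩
        · exact Finset.mem_biUnion.2 ⟨e, by simpa using he, Finset.mem_image_of_mem _ hc⟩
        · rw [mem_closedBall] at hxc ⊢
          rw [G.S_sim, mul_comm]
          exact (le_div_iff₀ (G.r_pos e)).1 hxc
      · calc (((Finset.univ.filter fun e => G.init e = i).biUnion
                fun e => (t e).image (G.S e)).card : ℝ)
            ≤ ∑ e with G.init e = i, ((t e).card : ℝ) := by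
              exact_mod_cast Finset.card_biUnion_le.trans
                (Finset.sum_le_sum fun e _ => Finset.card_image_le)
          _ ≤ ∑ e with G.init e = i, C * r ^ (-s) * (G.r e ^ s * v (G.term e)) := by
              refine Finset.sum_le_sum fun e _ => (htcard e).trans_eq ?_
              have hre := G.r_pos e
              rw [Real.div_rpow hr.le hre.le, Real.rpow_neg hre.le, div_inv_eq_mul]
              ring
          _ = C * r ^ (-s) * v i := by rw [← Finset.mul_sum, hfix]
  refine ⟨C * ∑ i, v i, D, hD, fun i r hr hrD => ?_⟩
  obtain ⟨n, hn⟩ := exists_pow_lt_of_lt_one (div_pos hr hD) hb1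
  obtain ⟨t, ht, htc⟩ := hmain n i r
    (by rw [mul_comm]; exact ((lt_div_iff₀ hD).1 hn).le)
    (hrD.trans (le_div_self hD.le ha ha1))
  refine ⟨t, ht, htc.trans ?_⟩
  rw [mul_right_comm]
  have : v i ≤ ∑ i, v i := Finset.single_le_sum (fun j _ => (hv j).le) (Finset.mem_univ i)
  gcongr

variable (G K v s) in
open Classical in
/-- The total weight of the cylinders of level `n` of `K i` that meet `W`. -/
def hitMass : ℕ → V → Set (Pt d) → ℝ
  | 0, i, W => if (K i ∩ W).Nonempty then v i else 0
  | n + 1, i, W => ∑ e with G.init e = i, G.r e ^ s * hitMass n (G.term e) (G.S e ⁻¹' W)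

lemma hitMass_le (hv : ∀ i, 0 < v i)
    (hfix : ∀ i, ∑ e with G.init e = i, G.r e ^ s * v (G.term e) = v i)
    (n : ℕ) (i : V) (W : Set (Pt d)) : hitMass G K v s n i W ≤ v i := by
  induction n generalizing i W with
  | zero =>
    rw [hitMass]
    split_ifs
    exacts [le_rfl, (hv i).le]
  | succ n ih =>
    rw [hitMass, ← hfix i]
    exact Finset.sum_le_sum fun e _ =>
      mul_le_mul_of_nonneg_left (ih _ _) (Real.rpow_nonneg (G.r_pos e).le _)

lemma hitMass_eq_zero (hK : G.IsAttractor K) (n : ℕ) (i : V) (W : Set (Pt d))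
    (hW : ¬ (K i ∩ W).Nonempty) : hitMass G K v s n i W = 0 := by
  induction n generalizing i W with
  | zero => rw [hitMass, if_neg hW]
  | succ n ih =>
    rw [hitMass]
    refine Finset.sum_eq_zero fun e he => ?_
    obtain rfl := (Finset.mem_filter.1 he).2
    rw [ih, mul_zero]
    rintro ⟨x, hx, hxW⟩
    exact hW ⟨G.S e x, hK.mapsTo e hx, hxW⟩

lemma hitMass_eq_of_subset (hK : G.IsAttractor K)
    (hfix : ∀ i, ∑ e with G.init e = i, G.r e ^ s * v (G.term e) = v i)
    (n : ℕ) (i : V) (W : Set (Pt d)) (hW : K i ⊆ W) : hitMass G K v s n i W = v i := by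
  induction n generalizing i W with
  | zero =>
    rw [hitMass, if_pos]
    rw [inter_eq_self_of_subset_left hW]
    exact hK.2.1 i
  | succ n ih =>
    rw [hitMass, ← hfix i]
    refine Finset.sum_congr rfl fun e he => ?_
    obtain rfl := (Finset.mem_filter.1 he).2
    rw [ih]
    exact fun x hx => hW (hK.mapsTo e hx)

lemma hitMass_biUnion_le (hv : ∀ i, 0 < v i) {ι : Type*} (F : Finset ι) (n : ℕ) (i : V)
    (W : ι → Set (Pt d)) :
    hitMass G K v s n i (⋃ k ∈ F, W k) ≤ ∑ k ∈ F, hitMass G K v s n i (W k) := by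
  induction n generalizing i W with
  | zero =>
    classical
    simp only [hitMass]
    have hnn : ∀ k ∈ F, 0 ≤ if (K i ∩ W k).Nonempty then v i else 0 := fun k _ => by
      split_ifs
      exacts [(hv i).le, le_rfl]
    split_ifs with h
    · obtain ⟨x, hx, hxW⟩ := h
      obtain ⟨k, hk, hxk⟩ := mem_iUnion₂.1 hxW
      refine le_trans ?_ (Finset.single_le_sum hnn hk)
      rw [if_pos ⟨x, hx, hxk⟩]
    · exact Finset.sum_nonneg hnn
  | succ n ih =>
    simp only [hitMass, preimage_iUnion]
    rw [Finset.sum_comm]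
    refine Finset.sum_le_sum fun e _ => ?_
    rw [← Finset.mul_sum]
    exact mul_le_mul_of_nonneg_left (ih _ _) (Real.rpow_nonneg (G.r_pos e).le _)

/-- Volume bound for `hitMass`: the copies of the open sets at scale `δ` are disjoint. -/
lemma hitMass_le_volume (hK : G.IsAttractor K) (hU : G.IsOSCWith U) (hv : ∀ i, 0 < v i)
    (hfix : ∀ i, ∑ e with G.init e = i, G.r e ^ s * v (G.term e) = v i)
    {a b c D : ℝ} (ha : 0 < a) (hb : 0 < b) (hc : 0 ≤ c) (hab : ∀ e, a ≤ G.r e ∧ G.r e ≤ b)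
    (hD : 0 < D) (hDist : ∀ i, ∀ x ∈ U i, ∀ y ∈ K i, dist x y ≤ D)
    (hbig : ∀ i δ, D ≤ δ → δ ≤ D / a → v i ≤ c * δ ^ (s - d) * μH[(d : ℝ)].real (U i))
    (n : ℕ) (i : V) (δ : ℝ) (W : Set (Pt d)) (hδ : D * b ^ n ≤ δ) (hδ' : δ ≤ D / a) :
    hitMass G K v s n i W ≤
      c * δ ^ (s - d) * μH[(d : ℝ)].real (U i ∩ thickening (2 * δ) W) := by
  have hHaar : Measure.IsAddHaarMeasure (G := Pt d) μH[(d : ℝ)] := by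
    simpa using isAddHaarMeasure_hausdorffMeasure (E := Pt d)
  have hfin : ∀ i (A : Set (Pt d)), μH[(d : ℝ)] (U i ∩ A) ≠ ⊤ := fun i A =>
    (((hU.2.2.1 i).subset inter_subset_left).measure_lt_top).ne
  have hlarge : ∀ n i δ (W : Set (Pt d)), D ≤ δ → δ ≤ D / a → hitMass G K v s n i W ≤
      c * δ ^ (s - d) * μH[(d : ℝ)].real (U i ∩ thickening (2 * δ) W) := by
    intro n i δ W h1 h2
    have hδ0 : 0 < δ := hD.trans_le h1
    by_cases hW : (K i ∩ W).Nonempty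
    · obtain ⟨y, hyK, hyW⟩ := hW
      have hsub : U i ∩ thickening (2 * δ) W = U i := by
        refine inter_eq_self_of_subset_left fun x hx => mem_thickening_iff.2 ⟨y, hyW, ?_⟩
        linarith [hDist i x hx y hyK]
      rw [hsub]
      exact (hitMass_le hv hfix n i W).trans (hbig i δ h1 h2)
    · rw [hitMass_eq_zero hK n i W hW]
      positivity
  induction n generalizing i δ W with
  | zero => exact hlarge 0 i δ W (by simpa using hδ) hδ'
  | succ n ih =>
    rcases le_or_gt D δ with hDδ | hDδ
    · exact hlarge _ i δ W hDδ hδ'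
    have hδ0 : 0 < δ := lt_of_lt_of_le (by positivity) hδ
    let A : E → Set (Pt d) := fun e =>
      U (G.term e) ∩ thickening (2 * (δ / G.r e)) (G.S e ⁻¹' W)
    have hterm : ∀ e, G.r e ^ s * hitMass G K v s n (G.term e) (G.S e ⁻¹' W) ≤
        c * δ ^ (s - d) * μH[(d : ℝ)].real (G.S e '' A e) := by
      intro e
      have hre := G.r_pos e
      have h1 := ih (G.term e) (δ / G.r e) (G.S e ⁻¹' W)
        (by
          rw [le_div_iff₀ hre]
          refine le_trans ?_ hδ
          rw [pow_succ, ← mul_assoc]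
          exact mul_le_mul_of_nonneg_left (hab e).2 (by positivity))
        (div_le_div₀ hD.le hDδ.le ha (hab e).1)
      have himage : G.S e '' A e ⊆ U (G.init e) := by
        refine (image_mono inter_subset_left).trans (Subset.trans ?_ (hU.2.2.2.2.1 (G.init e)))
        exact subset_iUnion₂_of_subset e rfl subset_rfl
      have h2 : G.r e ^ d * μH[(d : ℝ)].real (A e) ≤ μH[(d : ℝ)].real (G.S e '' A e) := by
        have h3 := ENNReal.toReal_mono
          (((hU.2.2.1 _).subset himage).measure_lt_top (μ := μH[(d : ℝ)])).ne
          (G.rpow_mul_hausdorffMeasure_le e (A e))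
        rwa [ENNReal.toReal_mul, ENNReal.toReal_ofReal (by positivity)] at h3
      have h4 : G.r e ^ s * (δ / G.r e) ^ (s - d) = δ ^ (s - d) * G.r e ^ d := by
        rw [Real.div_rpow hδ0.le hre.le, Real.rpow_sub hre s, Real.rpow_natCast]
        have := (Real.rpow_pos_of_pos hre s).ne'
        field_simp
      calc G.r e ^ s * hitMass G K v s n (G.term e) (G.S e ⁻¹' W)
          ≤ G.r e ^ s * (c * (δ / G.r e) ^ (s - d) * μH[(d : ℝ)].real (A e)) :=
            mul_le_mul_of_nonneg_left h1 (Real.rpow_nonneg hre.le _)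
        _ = c * (G.r e ^ s * (δ / G.r e) ^ (s - d)) * μH[(d : ℝ)].real (A e) := by ring
        _ = c * δ ^ (s - d) * (G.r e ^ d * μH[(d : ℝ)].real (A e)) := by rw [h4]; ring
        _ ≤ c * δ ^ (s - d) * μH[(d : ℝ)].real (G.S e '' A e) := by gcongr
    have hunion : ⋃ e ∈ Finset.univ.filter (fun e => G.init e = i), G.S e '' A e ⊆
        U i ∩ thickening (2 * δ) W := by
      refine iUnion₂_subset fun e he => ?_
      have hei : G.init e = i := (Finset.mem_filter.1 he).2
      rintro _ ⟨x, ⟨hxU, hxW⟩, rfl⟩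
      refine ⟨hU.2.2.2.2.1 i (mem_iUnion₂.2 ⟨e, hei, mem_image_of_mem _ hxU⟩), ?_⟩
      obtain ⟨y, hyW, hxy⟩ := mem_thickening_iff.1 hxW
      refine mem_thickening_iff.2 ⟨G.S e y, hyW, ?_⟩
      rw [G.S_sim, mul_comm]
      rw [← mul_div_assoc] at hxy
      exact (lt_div_iff₀ (G.r_pos e)).1 hxy
    have hmeas : ∀ e, MeasurableSet (G.S e '' A e) := fun e =>
      (G.measurableEmbedding_S e).measurableSet_image.2
        ((hU.2.1 _).inter isOpen_thickening).measurableSet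
    have hdisj : (↑(Finset.univ.filter fun e => G.init e = i) : Set E).PairwiseDisjoint
        fun e => G.S e '' A e := by
      intro e he e' he' hne
      have h1 : G.init e = i := by simpa using he
      have h2 : G.init e' = i := by simpa using he'
      exact (hU.2.2.2.2.2 e e' (h1.trans h2.symm) hne).mono (image_mono inter_subset_left)
        (image_mono inter_subset_left)
    have hsum : ∑ e with G.init e = i, μH[(d : ℝ)].real (G.S e '' A e) ≤
        μH[(d : ℝ)].real (U i ∩ thickening (2 * δ) W) := by
      rw [← measureReal_biUnion_finset hdisj (fun e _ => hmeas e) (fun e he =>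
        ne_top_of_le_ne_top (hfin i _)
          (measure_mono ((subset_iUnion₂_of_subset e he subset_rfl).trans hunion)))]
      exact measureReal_mono hunion (hfin i _)
    rw [hitMass]
    calc ∑ e with G.init e = i, G.r e ^ s * hitMass G K v s n (G.term e) (G.S e ⁻¹' W)
        ≤ ∑ e with G.init e = i, c * δ ^ (s - d) * μH[(d : ℝ)].real (G.S e '' A e) :=
          Finset.sum_le_sum fun e _ => hterm e
      _ = c * δ ^ (s - d) * ∑ e with G.init e = i, μH[(d : ℝ)].real (G.S e '' A e) :=
          Finset.mul_sum _ _ _ |>.symm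
      _ ≤ _ := by gcongr

/-- Under the open set condition, finite covers of the attractor by sets of small diameter have
`s`-dimensional sums bounded below. -/
lemma IsOSCWith.exists_le_sum_rpow_of_cover (hU : G.IsOSCWith U) (hK : G.IsAttractor K)
    (hv : ∀ i, 0 < v i)
    (hfix : ∀ i, ∑ e with G.init e = i, G.r e ^ s * v (G.term e) = v i) (hs : 0 ≤ s) :
    ∃ R : ℝ, 0 < R ∧ ∀ i, ∃ c : ℝ, 0 < c ∧ ∀ {ι : Type} (F : Finset ι) (W : ι → Set (Pt d))
      (δ : ι → ℝ), (∀ k ∈ F, 0 < δ k ∧ δ k ≤ R ∧ ∀ x ∈ W k, ∀ y ∈ W k, dist x y ≤ δ k) →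
      K i ⊆ ⋃ k ∈ F, W k → c ≤ ∑ k ∈ F, δ k ^ s := by
  have hHaar : Measure.IsAddHaarMeasure (G := Pt d) μH[(d : ℝ)] := by
    simpa using isAddHaarMeasure_hausdorffMeasure (E := Pt d)
  obtain ⟨a, b, ha, ha1, hb, hb1, hab⟩ := G.exists_ratio_bounds
  obtain ⟨D₀, hD₀⟩ := (Metric.isBounded_iff).1
    ((Bornology.isBounded_iUnion (s := fun i => U i ∪ K i)).2
      fun i => (hU.2.2.1 i).union (hK.1 i).isBounded)
  set D : ℝ := max D₀ 1 with hDdef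
  have hD : 0 < D := lt_max_of_lt_right one_pos
  have hDist : ∀ i, ∀ x ∈ U i, ∀ y ∈ K i, dist x y ≤ D := fun i x hx y hy =>
    (hD₀ (mem_iUnion.2 ⟨i, Or.inl hx⟩) (mem_iUnion.2 ⟨i, Or.inr hy⟩)).trans (le_max_left _ _)
  have hvol : ∀ i, 0 < μH[(d : ℝ)].real (U i) := fun i =>
    ENNReal.toReal_pos ((hU.2.1 i).measure_pos _ (hU.1 i)).ne'
      ((hU.2.2.1 i).measure_lt_top).ne
  set q : ℝ := D ^ s * ((D / a) ^ d)⁻¹ with hq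
  have hq0 : 0 < q := by positivity
  set c : ℝ := (∑ i, v i / μH[(d : ℝ)].real (U i)) / q with hc
  have hc0 : 0 ≤ c := div_nonneg
    (Finset.sum_nonneg fun i _ => div_nonneg (hv i).le (hvol i).le) hq0.le
  have hbig : ∀ i δ, D ≤ δ → δ ≤ D / a →
      v i ≤ c * δ ^ (s - d) * μH[(d : ℝ)].real (U i) := by
    intro i δ h1 h2
    have hδ : 0 < δ := hD.trans_le h1
    have h3 : q ≤ δ ^ (s - d) := by
      rw [hq, Real.rpow_sub hδ, Real.rpow_natCast, div_eq_mul_inv]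
      exact mul_le_mul (Real.rpow_le_rpow hD.le h1 hs)
        (inv_anti₀ (by positivity) (pow_le_pow_left₀ hδ.le h2 d)) (by positivity) (by positivity)
    have h4 : v i / μH[(d : ℝ)].real (U i) ≤ c * q := by
      rw [hc, div_mul_cancel₀ _ hq0.ne']
      exact Finset.single_le_sum (f := fun i => v i / μH[(d : ℝ)].real (U i))
        (fun j _ => div_nonneg (hv j).le (hvol j).le) (Finset.mem_univ i)
    rw [← div_le_iff₀ (hvol i)]
    exact h4.trans (mul_le_mul_of_nonneg_left h3 hc0)
  set C : ℝ := c * 3 ^ d * μH[(d : ℝ)].real (ball (0 : Pt d) 1) + 1 with hC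
  have hC0 : 0 < C := by positivity
  have hball : ∀ n i δ (W : Set (Pt d)), 0 < δ → D * b ^ n ≤ δ → δ ≤ D →
      (∀ x ∈ W, ∀ y ∈ W, dist x y ≤ δ) → hitMass G K v s n i W ≤ C * δ ^ s := by
    intro n i δ W hδ h1 h2 hW
    rcases W.eq_empty_or_nonempty with rfl | ⟨y, hy⟩
    · rw [hitMass_eq_zero hK n i ∅ (by simp)]
      positivity
    refine (hitMass_le_volume hK hU hv hfix ha hb hc0 hab hD hDist hbig n i δ W h1
      (h2.trans (le_div_self hD.le ha ha1))).trans ?_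
    have hsub : U i ∩ thickening (2 * δ) W ⊆ closedBall y (3 * δ) := by
      rintro x ⟨-, hx⟩
      obtain ⟨z, hz, hxz⟩ := mem_thickening_iff.1 hx
      rw [mem_closedBall]
      linarith [dist_triangle x z y, hW z hz y hy]
    have hle : μH[(d : ℝ)].real (U i ∩ thickening (2 * δ) W) ≤
        (3 * δ) ^ d * μH[(d : ℝ)].real (ball (0 : Pt d) 1) := by
      refine (measureReal_mono hsub measure_closedBall_lt_top.ne).trans_eq ?_
      rw [Measure.addHaar_real_closedBall _ _ (by positivity)]
      simp
    calc c * δ ^ (s - d) * μH[(d : ℝ)].real (U i ∩ thickening (2 * δ) W)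
        ≤ c * δ ^ (s - d) * ((3 * δ) ^ d * μH[(d : ℝ)].real (ball (0 : Pt d) 1)) := by gcongr
      _ = c * 3 ^ d * μH[(d : ℝ)].real (ball (0 : Pt d) 1) * (δ ^ (s - d) * δ ^ d) := by ring
      _ = c * 3 ^ d * μH[(d : ℝ)].real (ball (0 : Pt d) 1) * δ ^ s := by
          rw [← Real.rpow_natCast δ d, ← Real.rpow_add hδ, sub_add_cancel]
      _ ≤ C * δ ^ s := by gcongr; linarith
  refine ⟨D, hD, fun i => ⟨v i / C, div_pos (hv i) hC0, fun {ι} F W δ hF hcov => ?_⟩⟩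
  have hlim : Tendsto (fun n : ℕ => D * b ^ n) atTop (𝓝 0) := by
    simpa using (tendsto_pow_atTop_nhds_zero_of_lt_one hb.le hb1).const_mul D
  obtain ⟨n, hn⟩ : ∃ n : ℕ, ∀ k ∈ F, D * b ^ n < δ k :=
    ((Filter.eventually_all_finset F).2
      fun k hk => hlim.eventually_lt_const (hF k hk).1).exists
  rw [div_le_iff₀ hC0, mul_comm, Finset.mul_sum]
  calc v i = hitMass G K v s n i (⋃ k ∈ F, W k) :=
        (hitMass_eq_of_subset hK hfix n i _ hcov).symm
    _ ≤ ∑ k ∈ F, hitMass G K v s n i (W k) := hitMass_biUnion_le hv F n i W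
    _ ≤ ∑ k ∈ F, C * δ k ^ s := Finset.sum_le_sum fun k hk =>
        hball n i (δ k) (W k) (hF k hk).1 (hn k hk).le (hF k hk).2.1 (hF k hk).2.2

end Weighted

end MWGraph

/-- If finite covers of `A` by sets of small diameter have `s`-dimensional sums bounded below, then
small covering numbers of supersets of `A` are bounded below by a multiple of `r ^ (-s)`. -/
lemma le_coveringNumber_of_finite_cover {d : ℕ} {A B : Set (Pt d)} {s c R : ℝ} (hAB : A ⊆ B)
    (h : ∀ {ι : Type} (F : Finset ι) (W : ι → Set (Pt d)) (δ : ι → ℝ),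
      (∀ k ∈ F, 0 < δ k ∧ δ k ≤ R ∧ ∀ x ∈ W k, ∀ y ∈ W k, dist x y ≤ δ k) →
      A ⊆ ⋃ k ∈ F, W k → c ≤ ∑ k ∈ F, δ k ^ s)
    {r : ℝ} (hr : 0 < r) (hrR : r ≤ R / 2) {t : Finset (Pt d)}
    (ht : B ⊆ ⋃ x ∈ t, closedBall x r) :
    c / 2 ^ s * r ^ (-s) ≤ coveringNumber B r := by
  obtain ⟨x, hx⟩ := exists_cover_coveringNumber ht
  have h1 := h Finset.univ (fun k => closedBall (x k) r) (fun _ => 2 * r)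
    (fun k _ => ⟨by linarith, by linarith, fun y hy z hz => by
      rw [mem_closedBall] at hy hz
      linarith [dist_triangle_right y z (x k)]⟩)
    (by simpa using hAB.trans hx)
  rw [Finset.sum_const, Finset.card_univ, Fintype.card_fin, nsmul_eq_mul,
    Real.mul_rpow (by norm_num) hr.le] at h1
  have h2 : (0 : ℝ) < 2 ^ s := by positivity
  have h3 := Real.rpow_pos_of_pos hr s
  rw [Real.rpow_neg hr.le, ← div_eq_mul_inv, div_div, div_le_iff₀ (mul_pos h2 h3)]
  exact h1

theorem stmt18 {d : ℕ} {V E : Type} [Fintype V] [Fintype E] [DecidableEq V]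
    (G : MWGraph d V E) (hSC : G.StronglyConnected)
    (K U : V → Set (Pt d)) (hK : G.IsAttractor K) (hU : G.IsOSCWith U)
    (hX : Pairwise fun i j : V => Disjoint (interior (G.X i)) (interior (G.X j)))
    (s0 : ℝ) (hs0 : IsS0 G s0) :
    (∀ i : V,
      dimH (K i) = ENNReal.ofReal s0 ∧
      Tendsto (fun r : ℝ => Real.log (coveringNumber (K i) r : ℝ) / Real.log (1 / r))
        (𝓝[>] (0 : ℝ)) (𝓝 s0) ∧
      0 < μH[s0] (K i) ∧ μH[s0] (K i) < ⊤) ∧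
    dimH (⋃ i : V, K i) = ENNReal.ofReal s0 ∧
    Tendsto (fun r : ℝ => Real.log (coveringNumber (⋃ i : V, K i) r : ℝ) / Real.log (1 / r))
      (𝓝[>] (0 : ℝ)) (𝓝 s0) := by
  classical
  obtain ⟨hs, hρ⟩ := hs0
  obtain ⟨v, hv, hfix⟩ := G.exists_pos_weight hSC hρ
  obtain ⟨C, R₁, hR₁, hup⟩ := hK.exists_cover_card_le hv hfix hs
  obtain ⟨R₂, hR₂, hlow⟩ := hU.exists_le_sum_rpow_of_cover hK hv hfix hs
  have hne : Nonempty V := nonempty_of_matrixSpectralRadius_eq_one hρ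
  have hR : 0 < min R₁ (R₂ / 2) := lt_min hR₁ (half_pos hR₂)
  have hpos : ∀ i, 0 < μH[s0] (K i) := fun i => by
    obtain ⟨c, hc, h⟩ := hlow i
    exact hausdorffMeasure_pos_of_finite_cover (hK.1 i) hs hc hR₂ (fun F W δ => h F W δ)
  have hfin : ∀ i, μH[s0] (K i) < ⊤ := fun i =>
    hausdorffMeasure_lt_top_of_cover hs hR₁ (hup i)
  have hdim : ∀ i, dimH (K i) = ENNReal.ofReal s0 := fun i => by
    have hcoe : ((Real.toNNReal s0 : NNReal) : ℝ) = s0 := Real.coe_toNNReal _ hs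
    exact dimH_of_hausdorffMeasure_ne_zero_ne_top (d := Real.toNNReal s0)
      (by rw [hcoe]; exact (hpos i).ne') (by rw [hcoe]; exact (hfin i).ne)
  have hcover : ∀ r, 0 < r → r ≤ R₁ → ∃ t : Finset (Pt d),
      ⋃ i, K i ⊆ ⋃ c ∈ t, closedBall c r ∧
        (t.card : ℝ) ≤ (Fintype.card V * C) * r ^ (-s0) := by
    intro r hr hrR
    choose t ht htc using fun i => hup i r hr hrR
    refine ⟨Finset.univ.biUnion t, iUnion_subset fun i => (ht i).trans ?_, ?_⟩
    · exact iUnion₂_subset fun c hc => subset_iUnion₂_of_subset c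
        (Finset.mem_biUnion.2 ⟨i, Finset.mem_univ _, hc⟩) subset_rfl
    · calc ((Finset.univ.biUnion t).card : ℝ) ≤ ∑ i, ((t i).card : ℝ) := by
            exact_mod_cast Finset.card_biUnion_le
        _ ≤ ∑ _i : V, C * r ^ (-s0) := Finset.sum_le_sum fun i _ => htc i
        _ = (Fintype.card V * C) * r ^ (-s0) := by
            rw [Finset.sum_const, Finset.card_univ, nsmul_eq_mul, mul_assoc]
  refine ⟨fun i => ⟨hdim i, ?_, hpos i, hfin i⟩, ?_, ?_⟩
  · obtain ⟨c, hc, h⟩ := hlow i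
    refine tendsto_log_div_log_of_rpow_bounds (C := C) (c := c / 2 ^ s0) (by positivity) hR
      (fun r hr hrR => ?_) (fun r hr hrR => ?_)
    · obtain ⟨t, ht, -⟩ := hup i r hr (hrR.trans (min_le_left _ _))
      exact le_coveringNumber_of_finite_cover subset_rfl h hr (hrR.trans (min_le_right _ _)) ht
    · obtain ⟨t, ht, htc⟩ := hup i r hr (hrR.trans (min_le_left _ _))
      exact (Nat.cast_le.2 (coveringNumber_le_card ht)).trans htc
  · rw [dimH_iUnion]
    simp [hdim]
  · obtain ⟨i⟩ := hne
    obtain ⟨c, hc, h⟩ := hlow i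
    refine tendsto_log_div_log_of_rpow_bounds (C := Fintype.card V * C) (c := c / 2 ^ s0)
      (by positivity) hR (fun r hr hrR => ?_) (fun r hr hrR => ?_)
    · obtain ⟨t, ht, -⟩ := hcover r hr (hrR.trans (min_le_left _ _))
      exact le_coveringNumber_of_finite_cover (subset_iUnion K i) h hr
        (hrR.trans (min_le_right _ _)) ht
    · obtain ⟨t, ht, htc⟩ := hcover r hr (hrR.trans (min_le_left _ _))
      exact (Nat.cast_le.2 (coveringNumber_le_card ht)).trans htc
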